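/- Let c_imp > c_exp and f(x) = c_imp·max(x,0) + c_exp·min(x,0). If x_1, …, x_n are real numbers such that x_i > 0 and x_j < 0 for some indices i, j (i.e., the power crosses between import and export within the interval), then f((x_1+⋯+x_n)/n) < (f(x_1)+⋯+f(x_n))/n, with strict inequality. -/

import Mathlib

/-- If a finite family of reals has a positive and a negative member, the positive part of its sum
is strictly less than the sum of its positive parts. -/
theorem max_sum_zero_lt_sum_max_zero {ι : Type*} (s : Finset ι) (x : ι → ℝ) {i j : ι}
    (his : i ∈ s) (hjs : j ∈ s) (hi : 0 < x i) (hj : x j < 0) :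
    max (∑ k ∈ s, x k) 0 < ∑ k ∈ s, max (x k) 0 :=
  max_lt
    (Finset.sum_lt_sum (fun _ _ => le_max_left _ _) ⟨j, hjs, lt_max_of_lt_right hj⟩)
    (Finset.sum_pos' (fun _ _ => le_max_right _ _) ⟨i, his, lt_max_of_lt_left hi⟩)

/-- With a strict price spread `c_imp > c_exp`, an import/export crossing within
the interval makes the average-based cost strictly smaller than the average of
the fine-resolution costs. -/
theorem netBilling_average_strict (c_imp c_exp : ℝ) (h : c_exp < c_imp)
    (f : ℝ → ℝ) (hf : ∀ x, f x = c_imp * max x 0 + c_exp * min x 0)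
    (n : ℕ) (x : Fin n → ℝ)
    (i j : Fin n) (hi : 0 < x i) (hj : x j < 0) :
    f ((∑ k, x k) / n) < (∑ k, f (x k)) / n := by
  have hn : (0 : ℝ) < n := by exact_mod_cast i.pos
  have hf' (y : ℝ) : f y = c_exp * y + (c_imp - c_exp) * max y 0 := by
    rw [hf]
    linear_combination c_exp * max_add_min y 0
  have hmax : max ((∑ k, x k) / n) 0 = max (∑ k, x k) 0 / n := by
    rw [← max_div_div_right hn.le, zero_div]
  have hlt := max_sum_zero_lt_sum_max_zero Finset.univ x (Finset.mem_univ i)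
    (Finset.mem_univ j) hi hj
  simp only [hf', hmax, Finset.sum_add_distrib, ← Finset.mul_sum]
  rw [← mul_div_assoc, ← mul_div_assoc, ← add_div]
  have := sub_pos.mpr h
  gcongr
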